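/- Let x ∈ ℝ^p and σ ∈ ℝ be independent random variables, ε independent of (x, σ) with E[ε] = 0 and E[ε²] = 1, y = f(x) + σ ε, β := E[x xᵀ]⁻¹ E[x f(x)], g(x) := f(x) − xᵀβ, and w a function of σ, assuming all the expectations below are finite. Then E[(g(x)² + σ²) w(σ)² x xᵀ] = E[(y − xᵀβ)² w(σ)² x xᵀ], and consequently the asymptotic variance admits the representation ν(w) = B E[(y − xᵀβ)² w(σ)² x xᵀ] B / E[w(σ)]² with B := E[x xᵀ]⁻¹. -/

import Mathlib

open MeasureTheory ProbabilityTheory Matrix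

noncomputable section

/-- `E[x xᵀ]`, the second moment matrix of the random vector `x`. -/
def secondMoment {Ω : Type*} [MeasurableSpace Ω] {p : ℕ} (μ : Measure Ω)
    (x : Ω → Fin p → ℝ) : Matrix (Fin p) (Fin p) ℝ :=
  Matrix.of fun j k => ∫ ω, x ω j * x ω k ∂μ

/-- `β = E[x xᵀ]⁻¹ E[x f(x)]`, the slope of the best linear approximation to `f`. -/
def bestLinear {Ω : Type*} [MeasurableSpace Ω] {p : ℕ} (μ : Measure Ω)
    (x : Ω → Fin p → ℝ) (f : (Fin p → ℝ) → ℝ) : Fin p → ℝ :=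
  (secondMoment μ x)⁻¹ *ᵥ fun j => ∫ ω, x ω j * f (x ω) ∂μ

/-- `g(v) = f(v) − vᵀ β`, the nonlinear component of `f`. -/
def nonlinPart {Ω : Type*} [MeasurableSpace Ω] {p : ℕ} (μ : Measure Ω)
    (x : Ω → Fin p → ℝ) (f : (Fin p → ℝ) → ℝ) (v : Fin p → ℝ) : ℝ :=
  f v - v ⬝ᵥ bestLinear μ x f

/-- `E[g(x)² x xᵀ]`. -/
def misspecMoment {Ω : Type*} [MeasurableSpace Ω] {p : ℕ} (μ : Measure Ω)
    (x : Ω → Fin p → ℝ) (f : (Fin p → ℝ) → ℝ) : Matrix (Fin p) (Fin p) ℝ :=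
  Matrix.of fun j k => ∫ ω, (nonlinPart μ x f (x ω)) ^ 2 * (x ω j * x ω k) ∂μ

/-- The asymptotic covariance `ν(w)` of the weighted least squares estimator. -/
def asympVar {Ω : Type*} [MeasurableSpace Ω] {p : ℕ} (μ : Measure Ω)
    (x : Ω → Fin p → ℝ) (σ : Ω → ℝ) (f : (Fin p → ℝ) → ℝ) (w : ℝ → ℝ) :
    Matrix (Fin p) (Fin p) ℝ :=
  ((∫ ω, w (σ ω) ∂μ) ^ 2)⁻¹ •
    ((∫ ω, (w (σ ω)) ^ 2 ∂μ) •
        ((secondMoment μ x)⁻¹ * misspecMoment μ x f * (secondMoment μ x)⁻¹)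
      + (∫ ω, (σ ω) ^ 2 * (w (σ ω)) ^ 2 ∂μ) • (secondMoment μ x)⁻¹)

/-!
The residual of the best linear approximation is `y − xᵀβ = g(x) + σ ε`. Since `ε` is centred with
unit variance and independent of `(x, σ)`, averaging over it in `(g(x) + σ ε)²` removes the cross
term and leaves `g(x)² + σ²`. Independence of `x` and `σ` then gives
`E[(g(x)² + σ²) w(σ)² x xᵀ] = E[w(σ)²] E[g(x)² x xᵀ] + E[σ² w(σ)²] E[x xᵀ]`, and the sandwich by
`B = E[x xᵀ]⁻¹` collapses `B E[x xᵀ] B` to `B`.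
-/

section Noise

variable {Ω : Type*} [MeasurableSpace Ω] {μ : Measure Ω} {a b c ε : Ω → ℝ}

lemma integrable_mul_mul_of_integrable_sq_mul
    (ha : AEMeasurable a μ) (hb : AEMeasurable b μ) (hc : AEMeasurable c μ)
    (hac : Integrable (fun ω => a ω ^ 2 * c ω) μ)
    (hbc : Integrable (fun ω => b ω ^ 2 * c ω) μ) :
    Integrable (fun ω => a ω * b ω * c ω) μ := by
  refine (hac.norm.add hbc.norm).mono' (by fun_prop) (.of_forall fun ω => ?_)
  have young : |a ω * b ω| ≤ a ω ^ 2 + b ω ^ 2 := by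
    rw [abs_le]
    constructor <;> nlinarith [sq_nonneg (a ω + b ω), sq_nonneg (a ω - b ω)]
  calc ‖a ω * b ω * c ω‖ = |a ω * b ω| * |c ω| := by rw [Real.norm_eq_abs, abs_mul]
    _ ≤ (a ω ^ 2 + b ω ^ 2) * |c ω| := by gcongr
    _ = ‖a ω ^ 2 * c ω‖ + ‖b ω ^ 2 * c ω‖ := by
      simp only [norm_mul, norm_pow, Real.norm_eq_abs, sq_abs, add_mul]

lemma integral_sq_add_mul_centered_mul
    (ha : AEMeasurable a μ) (hb : AEMeasurable b μ) (hc : AEMeasurable c μ)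
    (hindep : IndepFun (fun ω => (a ω, b ω, c ω)) ε μ)
    (hε : Integrable ε μ) (hε_mean : ∫ ω, ε ω ∂μ = 0) (hε_sq : Integrable (fun ω => ε ω ^ 2) μ)
    (hac : Integrable (fun ω => a ω ^ 2 * c ω) μ)
    (hbc : Integrable (fun ω => b ω ^ 2 * c ω) μ) :
    ∫ ω, (a ω + b ω * ε ω) ^ 2 * c ω ∂μ
      = ∫ ω, a ω ^ 2 * c ω ∂μ + (∫ ω, ε ω ^ 2 ∂μ) * ∫ ω, b ω ^ 2 * c ω ∂μ := by
  have habc : Integrable (fun ω => a ω * b ω * c ω) μ :=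
    integrable_mul_mul_of_integrable_sq_mul ha hb hc hac hbc
  have cross_indep : IndepFun (fun ω => a ω * b ω * c ω) ε μ :=
    hindep.comp (φ := fun q : ℝ × ℝ × ℝ => q.1 * q.2.1 * q.2.2) (by fun_prop) measurable_id
  have square_indep : IndepFun (fun ω => b ω ^ 2 * c ω) (fun ω => ε ω ^ 2) μ :=
    hindep.comp (φ := fun q : ℝ × ℝ × ℝ => q.2.1 ^ 2 * q.2.2) (ψ := (· ^ 2))
      (by fun_prop) (by fun_prop)
  have cross_integrable : Integrable (fun ω => 2 * (a ω * b ω * c ω * ε ω)) μ :=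
    (cross_indep.integrable_mul habc hε).const_mul 2
  have square_integrable : Integrable (fun ω => b ω ^ 2 * c ω * ε ω ^ 2) μ :=
    square_indep.integrable_mul hbc hε_sq
  calc ∫ ω, (a ω + b ω * ε ω) ^ 2 * c ω ∂μ
      = ∫ ω, a ω ^ 2 * c ω + 2 * (a ω * b ω * c ω * ε ω) + b ω ^ 2 * c ω * ε ω ^ 2 ∂μ := by
        congr with ω
        ring
    _ = ∫ ω, a ω ^ 2 * c ω ∂μ + 2 * ∫ ω, a ω * b ω * c ω * ε ω ∂μ
          + ∫ ω, b ω ^ 2 * c ω * ε ω ^ 2 ∂μ := by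
        rw [integral_add (by exact hac.add cross_integrable) square_integrable,
          integral_add hac cross_integrable, integral_const_mul]
    _ = ∫ ω, a ω ^ 2 * c ω ∂μ + (∫ ω, ε ω ^ 2 ∂μ) * ∫ ω, b ω ^ 2 * c ω ∂μ := by
        rw [cross_indep.integral_fun_mul_eq_mul_integral habc.1 hε.1, hε_mean,
          square_indep.integral_fun_mul_eq_mul_integral hbc.1 hε_sq.1]
        ring

end Noise

/-- `E[q x xᵀ]`, the second moment matrix of the random vector `x` with random weight `q`. As with
`secondMoment`, an entry whose integrand is not integrable is `0`. -/
def weightedSecondMoment {Ω ι : Type*} [MeasurableSpace Ω] (μ : Measure Ω) (x : Ω → ι → ℝ)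
    (q : Ω → ℝ) : Matrix ι ι ℝ :=
  Matrix.of fun j k => ∫ ω, q ω * (x ω j * x ω k) ∂μ

section WeightedSecondMoment

variable {Ω ι : Type*} [MeasurableSpace Ω] {μ : Measure Ω} {x : Ω → ι → ℝ}

lemma weightedSecondMoment_add {q r : Ω → ℝ}
    (hq : ∀ j k, Integrable (fun ω => q ω * (x ω j * x ω k)) μ)
    (hr : ∀ j k, Integrable (fun ω => r ω * (x ω j * x ω k)) μ) :
    weightedSecondMoment μ x (fun ω => q ω + r ω)
      = weightedSecondMoment μ x q + weightedSecondMoment μ x r := by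
  ext j k
  simp only [weightedSecondMoment, Matrix.of_apply, Matrix.add_apply, add_mul]
  exact integral_add (hq j k) (hr j k)

lemma weightedSecondMoment_mul_of_indepFun {q r : Ω → ℝ} (hx : AEMeasurable x μ)
    (hq : AEMeasurable q μ) (hr : AEMeasurable r μ) (hindep : IndepFun (fun ω => (x ω, q ω)) r μ) :
    weightedSecondMoment μ x (fun ω => q ω * r ω)
      = (∫ ω, r ω ∂μ) • weightedSecondMoment μ x q := by
  ext j k
  have entry_indep : IndepFun r (fun ω => q ω * (x ω j * x ω k)) μ :=
    hindep.symm.comp (ψ := fun z : (ι → ℝ) × ℝ => z.2 * (z.1 j * z.1 k))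
      measurable_id (by fun_prop)
  simp only [weightedSecondMoment, Matrix.of_apply, Matrix.smul_apply, smul_eq_mul]
  rw [← entry_indep.integral_fun_mul_eq_mul_integral (by fun_prop) (by fun_prop)]
  congr with ω
  ring

lemma weightedSecondMoment_sq_add_mul_centered_mul {a b c ε : Ω → ℝ}
    (hx : AEMeasurable x μ) (ha : AEMeasurable a μ) (hb : AEMeasurable b μ) (hc : AEMeasurable c μ)
    (hindep : IndepFun (fun ω => (x ω, a ω, b ω, c ω)) ε μ)
    (hε : Integrable ε μ) (hε_mean : ∫ ω, ε ω ∂μ = 0) (hε_sq : Integrable (fun ω => ε ω ^ 2) μ)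
    (hac : ∀ j k, Integrable (fun ω => a ω ^ 2 * c ω * (x ω j * x ω k)) μ)
    (hbc : ∀ j k, Integrable (fun ω => b ω ^ 2 * c ω * (x ω j * x ω k)) μ) :
    weightedSecondMoment μ x (fun ω => (a ω + b ω * ε ω) ^ 2 * c ω)
      = weightedSecondMoment μ x (fun ω => a ω ^ 2 * c ω)
        + (∫ ω, ε ω ^ 2 ∂μ) • weightedSecondMoment μ x (fun ω => b ω ^ 2 * c ω) := by
  ext j k
  have entry_indep : IndepFun (fun ω => (a ω, b ω, c ω * (x ω j * x ω k))) ε μ :=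
    hindep.comp (φ := fun z => (z.2.1, z.2.2.1, z.2.2.2 * (z.1 j * z.1 k)))
      (by fun_prop) measurable_id
  simp only [weightedSecondMoment, Matrix.of_apply, Matrix.add_apply, Matrix.smul_apply,
    smul_eq_mul, mul_assoc] at hac hbc ⊢
  exact integral_sq_add_mul_centered_mul ha hb (by fun_prop) entry_indep hε hε_mean hε_sq
    (hac j k) (hbc j k)

end WeightedSecondMoment

lemma matrix_inv_mul_smul_add_smul_self_mul_inv {ι R : Type*} [Fintype ι] [DecidableEq ι]
    [CommRing R] {S : Matrix ι ι R} (hS : IsUnit S.det) (M : Matrix ι ι R) (a b : R) :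
    S⁻¹ * (a • M + b • S) * S⁻¹ = a • (S⁻¹ * M * S⁻¹) + b • S⁻¹ := by
  rw [Matrix.mul_add, Matrix.add_mul, Matrix.mul_smul, Matrix.mul_smul, Matrix.smul_mul,
    Matrix.smul_mul, Matrix.nonsing_inv_mul _ hS, Matrix.one_mul]

section Regression

variable {Ω : Type*} [MeasurableSpace Ω] {μ : Measure Ω} {p : ℕ} {x : Ω → Fin p → ℝ}
  {f : (Fin p → ℝ) → ℝ}

lemma weightedSecondMoment_one : weightedSecondMoment μ x (fun _ => 1) = secondMoment μ x := by
  simp only [weightedSecondMoment, secondMoment, one_mul]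

lemma weightedSecondMoment_of_indepFun {r : Ω → ℝ} (hx : AEMeasurable x μ) (hr : AEMeasurable r μ)
    (hindep : IndepFun x r μ) :
    weightedSecondMoment μ x r = (∫ ω, r ω ∂μ) • secondMoment μ x := by
  have const_indep : IndepFun (fun ω => (x ω, (1 : ℝ))) r μ :=
    hindep.comp (φ := fun v => (v, (1 : ℝ))) (by fun_prop) measurable_id
  simpa only [one_mul, weightedSecondMoment_one] using
    weightedSecondMoment_mul_of_indepFun hx aemeasurable_const hr const_indep

lemma measurable_nonlinPart (hf : Measurable f) : Measurable (nonlinPart μ x f) := by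
  unfold nonlinPart dotProduct
  fun_prop

lemma weightedSecondMoment_nonlinPart_sq_mul_of_indepFun {r : Ω → ℝ} (hx : AEMeasurable x μ)
    (hf : Measurable f) (hr : AEMeasurable r μ) (hindep : IndepFun x r μ) :
    weightedSecondMoment μ x (fun ω => nonlinPart μ x f (x ω) ^ 2 * r ω)
      = (∫ ω, r ω ∂μ) • misspecMoment μ x f := by
  have hg : Measurable (nonlinPart μ x f) := measurable_nonlinPart hf
  exact weightedSecondMoment_mul_of_indepFun hx (by fun_prop) hr
    (hindep.comp (φ := fun v => (v, nonlinPart μ x f v ^ 2)) (by fun_prop) measurable_id)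

lemma asympVar_eq_sandwich {σ : Ω → ℝ} {w : ℝ → ℝ} (hx : AEMeasurable x μ) (hσ : AEMeasurable σ μ)
    (hf : Measurable f) (hw : Measurable w) (hindep : IndepFun x σ μ)
    (hS : IsUnit (secondMoment μ x).det) :
    asympVar μ x σ f w
      = ((∫ ω, w (σ ω) ∂μ) ^ 2)⁻¹ •
          ((secondMoment μ x)⁻¹ *
            (weightedSecondMoment μ x (fun ω => nonlinPart μ x f (x ω) ^ 2 * w (σ ω) ^ 2)
              + weightedSecondMoment μ x (fun ω => σ ω ^ 2 * w (σ ω) ^ 2)) *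
            (secondMoment μ x)⁻¹) := by
  have hw_indep : IndepFun x (fun ω => w (σ ω) ^ 2) μ :=
    hindep.comp (ψ := fun s => w s ^ 2) measurable_id (by fun_prop)
  have hσw_indep : IndepFun x (fun ω => σ ω ^ 2 * w (σ ω) ^ 2) μ :=
    hindep.comp (ψ := fun s => s ^ 2 * w s ^ 2) measurable_id (by fun_prop)
  rw [weightedSecondMoment_nonlinPart_sq_mul_of_indepFun hx hf (by fun_prop) hw_indep,
    weightedSecondMoment_of_indepFun hx (by fun_prop) hσw_indep,
    matrix_inv_mul_smul_add_smul_self_mul_inv hS, asympVar]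

end Regression

/-- With `y = f(x) + σ ε`, `E[(g(x)² + σ²) w(σ)² x xᵀ]`
`= E[(y − xᵀβ)² w(σ)² x xᵀ]`, and consequently the asymptotic variance admits the
representation `ν(w) = B E[(y − xᵀβ)² w(σ)² x xᵀ] B / E[w(σ)]²` with `B = E[x xᵀ]⁻¹`. -/
theorem asympVar_residual_representation
    {Ω : Type*} [MeasurableSpace Ω] (μ : Measure Ω) [IsProbabilityMeasure μ] {p : ℕ}
    (x : Ω → Fin p → ℝ) (σ ε : Ω → ℝ) (f : (Fin p → ℝ) → ℝ) (w : ℝ → ℝ) (y : Ω → ℝ)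
    (hy : ∀ ω, y ω = f (x ω) + σ ω * ε ω)
    (hxmeas : Measurable x) (hσmeas : Measurable σ) (hεmeas : Measurable ε)
    (hfmeas : Measurable f) (hwmeas : Measurable w)
    (hxσindep : IndepFun x σ μ)
    (hεindep : IndepFun ε (fun ω => (x ω, σ ω)) μ)
    (hεint : Integrable ε μ) (hεmean : ∫ ω, ε ω ∂μ = 0)
    (hεsq : Integrable (fun ω => (ε ω) ^ 2) μ) (hεvar : ∫ ω, (ε ω) ^ 2 ∂μ = 1)
    (hfull : IsUnit (secondMoment μ x).det)
    (hxx : ∀ j k : Fin p, Integrable (fun ω => x ω j * x ω k) μ)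
    (hxf : ∀ j : Fin p, Integrable (fun ω => x ω j * f (x ω)) μ)
    (hw : Integrable (fun ω => w (σ ω)) μ)
    (hw2 : Integrable (fun ω => (w (σ ω)) ^ 2) μ)
    (hσ2w2 : Integrable (fun ω => (σ ω) ^ 2 * (w (σ ω)) ^ 2) μ)
    (hgw2xx : ∀ j k : Fin p,
      Integrable (fun ω =>
        (nonlinPart μ x f (x ω)) ^ 2 * (w (σ ω)) ^ 2 * (x ω j * x ω k)) μ)
    (hσ2w2xx : ∀ j k : Fin p,
      Integrable (fun ω => (σ ω) ^ 2 * (w (σ ω)) ^ 2 * (x ω j * x ω k)) μ)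
    (hcross : ∀ j k : Fin p,
      Integrable (fun ω =>
        nonlinPart μ x f (x ω) * σ ω * ε ω * (w (σ ω)) ^ 2 * (x ω j * x ω k)) μ)
    (hσ2ε2 : ∀ j k : Fin p,
      Integrable (fun ω => (σ ω) ^ 2 * (ε ω) ^ 2 * (w (σ ω)) ^ 2 * (x ω j * x ω k)) μ)
    (hresid : ∀ j k : Fin p,
      Integrable (fun ω =>
        (y ω - x ω ⬝ᵥ bestLinear μ x f) ^ 2 * (w (σ ω)) ^ 2 * (x ω j * x ω k)) μ) :
    (∀ j k : Fin p,
      ∫ ω, ((nonlinPart μ x f (x ω)) ^ 2 + (σ ω) ^ 2) * (w (σ ω)) ^ 2 * (x ω j * x ω k) ∂μ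
        = ∫ ω, (y ω - x ω ⬝ᵥ bestLinear μ x f) ^ 2 * (w (σ ω)) ^ 2 * (x ω j * x ω k) ∂μ) ∧
    asympVar μ x σ f w
      = ((∫ ω, w (σ ω) ∂μ) ^ 2)⁻¹ •
          ((secondMoment μ x)⁻¹ *
            (Matrix.of fun j k =>
              ∫ ω, (y ω - x ω ⬝ᵥ bestLinear μ x f) ^ 2 * (w (σ ω)) ^ 2 * (x ω j * x ω k) ∂μ) *
            (secondMoment μ x)⁻¹) := by
  have hg : Measurable (nonlinPart μ x f) := measurable_nonlinPart hfmeas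
  have noise_indep :
      IndepFun (fun ω => (x ω, nonlinPart μ x f (x ω), σ ω, w (σ ω) ^ 2)) ε μ :=
    hεindep.symm.comp (φ := fun z => (z.1, nonlinPart μ x f z.1, z.2, w z.2 ^ 2))
      (by fun_prop) measurable_id
  have residual_eq : ∀ ω, y ω - x ω ⬝ᵥ bestLinear μ x f = nonlinPart μ x f (x ω) + σ ω * ε ω := by
    intro ω
    rw [hy, nonlinPart]
    ring
  have residual_moment :
      weightedSecondMoment μ x (fun ω => (y ω - x ω ⬝ᵥ bestLinear μ x f) ^ 2 * w (σ ω) ^ 2)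
        = weightedSecondMoment μ x (fun ω => nonlinPart μ x f (x ω) ^ 2 * w (σ ω) ^ 2)
          + weightedSecondMoment μ x (fun ω => σ ω ^ 2 * w (σ ω) ^ 2) := by
    simp only [residual_eq]
    rw [weightedSecondMoment_sq_add_mul_centered_mul (by fun_prop) (by fun_prop) (by fun_prop)
      (by fun_prop) noise_indep hεint hεmean hεsq hgw2xx hσ2w2xx, hεvar, one_smul]
  constructor
  · simp only [add_mul _ _ (w _ ^ 2)]
    exact congrFun₂ ((weightedSecondMoment_add hgw2xx hσ2w2xx).trans residual_moment.symm)
  · rw [asympVar_eq_sandwich (by fun_prop) (by fun_prop) hfmeas hwmeas hxσindep hfull,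
      ← residual_moment, weightedSecondMoment]
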